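/- Let F_q be a finite field, let m ≥ 1, let P ⊆ ℝ^m be an m-dimensional lattice polytope contained in the nonnegative orthant, and for 1 ≤ j ≤ m let ℓ_j denote the length of the projection of P onto the j-th coordinate axis. Let S = {p_1,…,p_n} ⊆ (F_q^*)^m be a set of n distinct points containing a box S_1 × ⋯ × S_m with S_j ⊆ F_q^*, |S_j| = s_j > ℓ_j. Set λ = ⌈ e·((m+1)·n / vol(P))^{1/(m+1)} ⌉ and assume min_{1≤j≤m} s_j/ℓ_j > λ ≥ m. Then for every integer t > n − ∏_{j=1}^m (s_j − λ·ℓ_j) and every y = (y_1,…,y_n) ∈ F_q^n, there exists a nonzero polynomial Q ∈ F_q[X_1,…,X_m,Y] with support contained in λ·Pyr(P) ∩ ℤ^{m+1} and Q(p_j, y_j) = 0 for all j, such that every f ∈ L_q(P) satisfying f(p_j) = y_j for at least t indices j satisfies Q(X_1,…,X_m, f(X_1,…,X_m)) = 0 identically. -/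

import Mathlib

open scoped Classical Pointwise

/-- `Pyr(P) ⊆ ℝ^{m+1}`: the convex hull of the point `(0,…,0,1)` together with `P × {0}`. -/
noncomputable def pyr {m : ℕ} (P : Set (Fin m → ℝ)) : Set (Fin (m + 1) → ℝ) :=
  convexHull ℝ ({Fin.snoc (0 : Fin m → ℝ) (1 : ℝ)} ∪ (fun x => Fin.snoc x (0 : ℝ)) '' P)

/-!
Lift each vertex `v` of `P` to height one, `(v, 1)`. The cone over the lifted polytope is
triangulated by the cones on the optimal bases of the linear program with a generic cost, and
LP duality shows that these cover it without overlap. For a small generic shift of positive height,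
every shifted lattice point avoids the walls of the triangulation, and a simplicial cone on
`d = m + 1` lifted vertices contains at least `|det| * L.choose d` lattice points whose shift has
height below `L`: `L.choose d` in each of the `|det|` residue classes modulo the sublattice
spanned by its generators. Adding up the cones turns determinants into `d!` times the volume of
the cone below height one, which is `vol(P) / d`. With `L = λ + 1` and
`L.descFactorial d ≥ (L / e) ^ d`, this gives more than `n` monomials in `λ • Pyr(P)`.

Linear algebra then yields a nonzero `Q` supported there and vanishing at all `(p_k, y_k)`. If `f`
has support in `P`, then `Q(X, f(X))` has support in `λ • P`, so after division by a monomial its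
degree in the `j`-th variable is at most `λ ℓ_j`; if nonzero, it takes nonzero values on at least
`∏ (s_j - λ ℓ_j)` points of the box, and at each of them `f` disagrees with `y`.
-/

namespace PolytopeCode

open MeasureTheory Filter Topology Module

section LinearAlgebra

variable {K V κ : Type*} [Field K] [AddCommGroup V] [Module K V] {v : κ → V}

theorem exists_dual_eqOn {s : Set κ} (hs : LinearIndepOn K v s) (ω : κ → K) :
    ∃ φ : Dual K V, ∀ k ∈ s, φ (v k) = ω k := by
  obtain ⟨φ, hφ⟩ := ((Basis.span hs.linearIndependent).constr K fun k => ω k).exists_extend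
  refine ⟨φ, fun k hk => ?_⟩
  have := (Basis.span hs.linearIndependent).constr_basis K (fun k => ω k) ⟨k, hk⟩
  rw [← hφ] at this
  simpa [Basis.span_apply hs.linearIndependent] using this

theorem exists_map_univ_eq_of_span_eq_top {ι : Type*} [Fintype ι] {B : Finset κ}
    (hι : Fintype.card ι = finrank K V) (hB : LinearIndepOn K v (B : Set κ))
    (hspan : Submodule.span K (v '' B) = ⊤) : ∃ e : ι ↪ κ, Finset.univ.map e = B := by
  have hcard : Fintype.card ι = Fintype.card B := by
    rw [hι, finrank_eq_card_basis (Basis.mk (v := fun k : B => v k) hB.linearIndependent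
      (by rw [← hspan, Set.image_eq_range]; rfl))]
  obtain ⟨e⟩ := Fintype.card_eq.mp hcard
  refine ⟨e.toEmbedding.trans (.subtype _), ?_⟩
  rw [← Finset.map_map, Finset.map_univ_equiv]
  exact Finset.attach_map_val

end LinearAlgebra

section RegularTriangulation

variable {κ E : Type*} [AddCommGroup E] [Module ℝ E] {v : κ → E} {ω c : κ → ℝ} {x : E}
  {B B' : Finset κ}

/-- A point avoiding every proper subspace spanned by some of the vectors `v k`. -/
def IsGenericPoint (v : κ → E) (x : E) : Prop :=
  ∀ B : Finset κ, x ∈ Submodule.span ℝ (v '' B) → Submodule.span ℝ (v '' B) = ⊤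

theorem IsGenericPoint.comp {ι : Type*} (hx : IsGenericPoint v x) (e : ι ↪ κ) :
    IsGenericPoint (v ∘ e) x := fun B hB => by
  rw [Set.image_comp, ← Finset.coe_map] at hB ⊢
  exact hx _ hB

variable [Fintype κ]

/-- The convex cone spanned by the vectors `v k`. -/
def cone (v : κ → E) : Set E :=
  {x | ∃ c : κ → ℝ, 0 ≤ c ∧ ∑ k, c k • v k = x}

/-- The relatively open cone spanned by the vectors `v k` with `k ∈ B`; its points have
coefficients that are positive on `B` and vanish off `B`. -/
def openCone (v : κ → E) (B : Finset κ) : Set E :=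
  {x | ∃ c : κ → ℝ, (∀ k ∈ B, 0 < c k) ∧ (∀ k ∉ B, c k = 0) ∧ ∑ k, c k • v k = x}

/-- A height function `ω` on the vectors `v k` such that every linearly dependent subfamily has a
relation that `ω` does not satisfy. -/
def IsGenericCost (v : κ → E) (ω : κ → ℝ) : Prop :=
  ∀ B : Finset κ, ¬ LinearIndepOn ℝ v (B : Set κ) →
    ∃ r : κ → ℝ, (∀ k ∉ B, r k = 0) ∧ ∑ k, r k • v k = 0 ∧ ∑ k, r k * ω k ≠ 0

/-- The full-dimensional cells of the regular subdivision induced by the heights `ω`: the lower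
facets of the cone over the lifted vectors `(v k, ω k)`, cut out by a linear functional `φ`. -/
def IsRegularCell (v : κ → E) (ω : κ → ℝ) (B : Finset κ) : Prop :=
  Submodule.span ℝ (v '' B) = ⊤ ∧
    ∃ φ : Dual ℝ E, (∀ k ∈ B, φ (v k) = ω k) ∧ ∀ k ∉ B, φ (v k) < ω k

/-- `c` solves the linear program of writing the vector `∑ k, c k • v k` as a nonnegative
combination of least cost. -/
def IsMinCost (v : κ → E) (ω c : κ → ℝ) : Prop :=
  0 ≤ c ∧ ∀ c' : κ → ℝ, 0 ≤ c' → ∑ k, c' k • v k = ∑ k, c k • v k →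
    ∑ k, c k * ω k ≤ ∑ k, c' k * ω k

theorem exists_isGenericCost (v : κ → E) : ∃ ω : κ → ℝ, IsGenericCost v ω := by
  have exists_relation (B : {B : Finset κ // ¬ LinearIndepOn ℝ v (B : Set κ)}) :
      ∃ r : κ → ℝ, (∀ k ∉ B.1, r k = 0) ∧ ∑ k, r k • v k = 0 ∧ ∃ k, r k ≠ 0 := by
    obtain ⟨r, hr, k, hk, hrk⟩ := not_linearIndepOn_finset_iff.mp B.2
    refine ⟨fun k => if k ∈ B.1 then r k else 0, fun k hk => if_neg hk, ?_, k, by simpa [hk]⟩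
    simpa [ite_smul, Finset.sum_ite_mem] using hr
  choose r hr_supp hr_rel hr_ne using exists_relation
  obtain ⟨ω, hω⟩ := Dual.exists_forall_ne_zero_of_forall_exists
    (fun B => Fintype.linearCombination ℝ (r B)) fun B => by
      obtain ⟨k, hk⟩ := hr_ne B
      exact ⟨Pi.single k 1, by simpa [Fintype.linearCombination_apply_single] using hk⟩
  refine ⟨ω, fun B hB => ⟨r ⟨B, hB⟩, hr_supp ⟨B, hB⟩, hr_rel ⟨B, hB⟩, ?_⟩⟩
  simpa [Fintype.linearCombination_apply, mul_comm] using hω ⟨B, hB⟩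

theorem IsGenericCost.linearIndepOn_of_eqOn (hω : IsGenericCost v ω) {φ : Dual ℝ E}
    (hφ : ∀ k ∈ B, φ (v k) = ω k) : LinearIndepOn ℝ v (B : Set κ) := by
  by_contra hB
  obtain ⟨r, hr_supp, hr_rel, hr_ne⟩ := hω B hB
  refine hr_ne ?_
  calc ∑ k, r k * ω k = ∑ k, r k * φ (v k) := Finset.sum_congr rfl fun k _ => by
        by_cases hk : k ∈ B
        · rw [hφ k hk]
        · simp [hr_supp k hk]
    _ = φ (∑ k, r k • v k) := by simp
    _ = 0 := by rw [hr_rel, map_zero]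

theorem IsRegularCell.linearIndepOn (hB : IsRegularCell v ω B) (hω : IsGenericCost v ω) :
    LinearIndepOn ℝ v (B : Set κ) :=
  let ⟨_, _, hφ, _⟩ := hB
  hω.linearIndepOn_of_eqOn hφ

-- Of all the functionals of regular cells, the one of the cell containing `x` is largest at `x`.
theorem apply_le_apply_of_mem_openCone (hx : x ∈ openCone v B) {φ φ' : Dual ℝ E}
    (hφ : ∀ k ∈ B, φ (v k) = ω k) (hφ' : ∀ k, φ' (v k) ≤ ω k) :
    φ' x ≤ φ x ∧ (φ' x = φ x → ∀ k ∈ B, φ' (v k) = ω k) := by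
  obtain ⟨c, hc_pos, hc_zero, rfl⟩ := hx
  have hterm : ∀ k ∈ Finset.univ, c k * φ' (v k) ≤ c k * φ (v k) := fun k _ => by
    by_cases hk : k ∈ B
    · rw [hφ k hk]
      exact mul_le_mul_of_nonneg_left (hφ' k) (hc_pos k hk).le
    · simp [hc_zero k hk]
  simp only [map_sum, map_smul, smul_eq_mul]
  refine ⟨Finset.sum_le_sum hterm, fun h k hk => ?_⟩
  have := (Finset.sum_eq_sum_iff_of_le hterm).mp h k (Finset.mem_univ k)
  rw [mul_left_cancel₀ (hc_pos k hk).ne' this, hφ k hk]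

theorem IsRegularCell.eq_of_mem_openCone (hB : IsRegularCell v ω B) (hB' : IsRegularCell v ω B')
    (hx : x ∈ openCone v B) (hx' : x ∈ openCone v B') : B = B' := by
  obtain ⟨-, φ, hφ, hφ_lt⟩ := hB
  obtain ⟨-, φ', hφ', hφ'_lt⟩ := hB'
  have le_cost {A : Finset κ} {ψ : Dual ℝ E} (h : ∀ k ∈ A, ψ (v k) = ω k)
      (h' : ∀ k ∉ A, ψ (v k) < ω k) (k : κ) : ψ (v k) ≤ ω k := by
    by_cases hk : k ∈ A
    · exact (h k hk).le
    · exact (h' k hk).le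
  obtain ⟨hle, heq⟩ := apply_le_apply_of_mem_openCone hx hφ (le_cost hφ' hφ'_lt)
  obtain ⟨hle', heq'⟩ := apply_le_apply_of_mem_openCone hx' hφ' (le_cost hφ hφ_lt)
  refine Finset.Subset.antisymm (fun k hk => ?_) fun k hk => ?_
  · by_contra hk'
    exact (hφ'_lt k hk').ne (heq (hle.antisymm hle') k hk)
  · by_contra hk'
    exact (hφ_lt k hk').ne (heq' (hle'.antisymm hle) k hk)

theorem isCompact_setOf_sum_smul_eq [FiniteDimensional ℝ E] {ht : Dual ℝ E}
    (hht : ∀ k, 0 < ht (v k)) (x : E) : IsCompact {c : κ → ℝ | 0 ≤ c ∧ ∑ k, c k • v k = x} := by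
  have hbdd : Bornology.IsBounded {c : κ → ℝ | 0 ≤ c ∧ ∑ k, c k • v k = x} := by
    refine (Metric.isBounded_Icc 0 (fun k => ht x / ht (v k))).subset ?_
    rintro c ⟨hc, rfl⟩
    refine ⟨hc, fun k => (le_div_iff₀ (hht k)).mpr ?_⟩
    simpa using Finset.single_le_sum (f := fun k => c k * ht (v k))
      (fun k _ => mul_nonneg (hc k) (hht k).le) (Finset.mem_univ k)
  have hclosed : IsClosed {c : κ → ℝ | ∑ k, c k • v k = x} := by
    obtain hempty | ⟨c₀, rfl⟩ := Set.eq_empty_or_nonempty {c : κ → ℝ | ∑ k, c k • v k = x}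
    · exact hempty ▸ isClosed_empty
    · have hker : IsClosed {c | c - c₀ ∈ LinearMap.ker (Fintype.linearCombination ℝ v)} :=
        (Submodule.closed_of_finiteDimensional _).preimage (continuous_id.sub continuous_const)
      simpa [sub_smul, sub_eq_zero, Fintype.linearCombination_apply] using hker
  exact Metric.isCompact_of_isClosed_isBounded (isClosed_Ici.inter hclosed) hbdd

theorem exists_isMinCost [FiniteDimensional ℝ E] {ht : Dual ℝ E} (hht : ∀ k, 0 < ht (v k))
    (ω : κ → ℝ) (hx : x ∈ cone v) : ∃ c, IsMinCost v ω c ∧ ∑ k, c k • v k = x := by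
  obtain ⟨c, ⟨hc, rfl⟩, hmin⟩ := (isCompact_setOf_sum_smul_eq hht x).exists_isMinOn
    (f := fun c => ∑ k, c k * ω k) hx (by fun_prop)
  exact ⟨c, ⟨hc, fun c' hc' h => hmin ⟨hc', h⟩⟩, rfl⟩

theorem IsMinCost.sum_mul_nonneg (hc : IsMinCost v ω c) {r : κ → ℝ} (hr : ∑ k, r k • v k = 0)
    (hr_nonneg : ∀ k, c k = 0 → 0 ≤ r k) : 0 ≤ ∑ k, r k * ω k := by
  have hsmall (k : κ) : ∀ᶠ τ in 𝓝[>] (0 : ℝ), 0 ≤ c k + τ * r k := by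
    obtain h | h := (hc.1 k).eq_or_lt
    · filter_upwards [self_mem_nhdsWithin] with τ hτ
      simpa [← h] using mul_nonneg (le_of_lt hτ) (hr_nonneg k h.symm)
    · have hcont : Continuous fun τ : ℝ => c k + τ * r k := by fun_prop
      have := (hcont.tendsto 0).eventually (lt_mem_nhds (a := 0) (by simpa using h))
      exact nhdsWithin_le_nhds (this.mono fun τ => le_of_lt)
  obtain ⟨τ, hτ_nonneg, hτ⟩ := ((eventually_all.mpr hsmall).and self_mem_nhdsWithin).exists
  have hle := hc.2 (fun k => c k + τ * r k) hτ_nonneg (by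
    simp only [add_smul, mul_smul, Finset.sum_add_distrib, ← Finset.smul_sum, hr, smul_zero,
      add_zero])
  simp only [add_mul, Finset.sum_add_distrib, mul_assoc, ← Finset.mul_sum,
    le_add_iff_nonneg_right] at hle
  exact nonneg_of_mul_nonneg_right hle hτ

theorem IsMinCost.linearIndepOn_support (hc : IsMinCost v ω c) (hω : IsGenericCost v ω) :
    LinearIndepOn ℝ v ({k | c k ≠ 0} : Finset κ) := by
  by_contra hdep
  obtain ⟨r, hr_supp, hr_rel, hr_ne⟩ := hω _ hdep
  have hr_zero (k : κ) (hk : c k = 0) : r k = 0 := hr_supp k (by simp [hk])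
  have hnonneg := hc.sum_mul_nonneg hr_rel fun k hk => (hr_zero k hk).ge
  have hnonpos := hc.sum_mul_nonneg (r := -r) (by simp [hr_rel]) fun k hk => by simp [hr_zero k hk]
  simp only [Pi.neg_apply, neg_mul, Finset.sum_neg_distrib, Left.nonneg_neg_iff] at hnonpos
  exact hr_ne (hnonpos.antisymm hnonneg)

theorem IsMinCost.apply_le (hc : IsMinCost v ω c)
    (hspan : Submodule.span ℝ (v '' ({k | c k ≠ 0} : Finset κ)) = ⊤) {φ : Dual ℝ E}
    (hφ : ∀ k, c k ≠ 0 → φ (v k) = ω k) (k : κ) : φ (v k) ≤ ω k := by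
  obtain ⟨a, ha⟩ := Submodule.mem_span_image_finset_iff_exists_fun' ℝ |>.mp
    (hspan ▸ Submodule.mem_top : v k ∈ Submodule.span ℝ (v '' ({k | c k ≠ 0} : Finset κ)))
  let r : κ → ℝ := Pi.single k 1 - fun j => if c j ≠ 0 then a j else 0
  have hr_rel : ∑ j, r j • v j = 0 := by
    simp [r, sub_smul, ite_smul, Pi.single_apply, Finset.sum_ite, ← ha]
  have hr_cost : ∑ j, r j * ω j = ω k - φ (v k) := by
    have : ∀ j ∈ ({k | c k ≠ 0} : Finset κ), a j * φ (v j) = a j * ω j := fun j hj => by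
      rw [hφ j (by simpa using hj)]
    rw [← ha]
    simp only [map_sum, map_smul, smul_eq_mul, Finset.sum_congr rfl this]
    simp [r, sub_mul, ite_mul, Pi.single_apply, Finset.sum_ite]
  rw [← sub_nonneg, ← hr_cost]
  refine hc.sum_mul_nonneg hr_rel fun j hj => ?_
  simp only [r, Pi.sub_apply, hj, ne_eq, not_true_eq_false, if_false, sub_zero]
  exact Pi.single_nonneg (α := fun _ => ℝ) |>.mpr zero_le_one j

theorem IsMinCost.isRegularCell_support (hc : IsMinCost v ω c) (hω : IsGenericCost v ω)
    (hspan : Submodule.span ℝ (v '' ({k | c k ≠ 0} : Finset κ)) = ⊤) :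
    IsRegularCell v ω ({k | c k ≠ 0} : Finset κ) := by
  obtain ⟨φ, hφ⟩ := exists_dual_eqOn (hc.linearIndepOn_support hω) ω
  refine ⟨hspan, φ, hφ, fun k hk => ?_⟩
  refine (hc.apply_le hspan (by simpa using hφ) k).lt_of_ne fun heq => ?_
  have hindep : LinearIndepOn ℝ v (insert k ({k | c k ≠ 0} : Finset κ) : Finset κ) :=
    hω.linearIndepOn_of_eqOn (φ := φ) (Finset.forall_mem_insert _ _ _ |>.mpr ⟨heq, hφ⟩)
  rw [Finset.coe_insert, linearIndepOn_insert (by simpa using hk), hspan] at hindep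
  exact hindep.2 trivial

theorem sum_smul_mem_span_support (c : κ → ℝ) :
    ∑ k, c k • v k ∈ Submodule.span ℝ (v '' ({k | c k ≠ 0} : Finset κ)) := by
  refine Submodule.sum_mem _ fun k _ => ?_
  by_cases hk : c k = 0
  · simp [hk]
  · exact Submodule.smul_mem _ _ (Submodule.subset_span ⟨k, by simpa using hk, rfl⟩)

theorem IsGenericPoint.exists_isRegularCell [FiniteDimensional ℝ E] (hx : IsGenericPoint v x)
    (hω : IsGenericCost v ω) {ht : Dual ℝ E} (hht : ∀ k, 0 < ht (v k)) (hxv : x ∈ cone v) :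
    ∃ B, IsRegularCell v ω B ∧ x ∈ openCone v B := by
  obtain ⟨c, hc, rfl⟩ := exists_isMinCost hht ω hxv
  have hspan := hx _ (sum_smul_mem_span_support c)
  refine ⟨({k | c k ≠ 0} : Finset κ), hc.isRegularCell_support hω hspan, c, fun k hk => ?_,
    fun k hk => by simpa using hk, rfl⟩
  exact (hc.1 k).lt_of_ne' (by simpa using hk)

theorem IsGenericPoint.coeff_pos (hx : IsGenericPoint v x) (hv : LinearIndependent ℝ v)
    (hc : 0 ≤ c) (hcx : ∑ k, c k • v k = x) (k : κ) : 0 < c k := by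
  refine (hc k).lt_of_ne' fun hk => ?_
  have hspan := hx _ (hcx ▸ sum_smul_mem_span_support c)
  exact hv.notMem_span_image (by simpa using hk) (hspan ▸ Submodule.mem_top)

theorem mem_openCone_map_univ_iff {ι : Type*} [Fintype ι] {e : ι ↪ κ} :
    x ∈ openCone v (Finset.univ.map e) ↔
      ∃ c : ι → ℝ, (∀ i, 0 < c i) ∧ ∑ i, c i • v (e i) = x := by
  have hsum {c : κ → ℝ} (hc : ∀ k ∉ Finset.univ.map e, c k = 0) :
      ∑ k, c k • v k = ∑ i, c (e i) • v (e i) := by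
    rw [← Finset.sum_subset (Finset.subset_univ (Finset.univ.map e)) fun k _ hk => by
      rw [hc k hk, zero_smul], Finset.sum_map]
  constructor
  · rintro ⟨c, hc_pos, hc_zero, rfl⟩
    exact ⟨fun i => c (e i), fun i => hc_pos _ (by simp), (hsum hc_zero).symm⟩
  · rintro ⟨c, hc_pos, rfl⟩
    have hext (i : ι) : Function.extend e c 0 (e i) = c i := e.injective.extend_apply c 0 i
    have hzero : ∀ k ∉ Finset.univ.map e, Function.extend e c 0 k = 0 := fun k hk =>
      Function.extend_apply' _ _ _ (by simpa using hk)
    refine ⟨Function.extend e c 0, fun k hk => ?_, hzero, ?_⟩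
    · obtain ⟨i, -, rfl⟩ := Finset.mem_map.mp hk
      exact (hext i).symm ▸ hc_pos i
    · simp only [hsum hzero, hext]

end RegularTriangulation

section LatticeSimplex

/-- The inclusion `ℤ^ι ⊆ ℝ^ι` of the integer lattice. -/
def intVec {ι : Type*} : (ι → ℤ) →+ (ι → ℝ) :=
  (Int.castAddHom ℝ).compLeft ι

@[simp]
theorem intVec_apply {ι : Type*} (z : ι → ℤ) (i : ι) : intVec z i = z i := rfl

theorem linearIndependent_of_intVec {α ι : Type*} {b : α → ι → ℤ}
    (hb : LinearIndependent ℝ fun a => intVec (b a)) : LinearIndependent ℤ b :=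
  .of_comp intVec.toIntLinearMap (hb.restrict_scalars (by simpa using Int.cast_injective))

variable {ι : Type*} [Fintype ι]

/-- The open standard simplex `{c > 0, ∑ c < 1}` of full dimension in `ℝ^ι`. -/
def openStdSimplex (ι : Type*) [Fintype ι] : Set (ι → ℝ) :=
  {c | (∀ i, 0 < c i) ∧ ∑ i, c i < 1}

theorem isOpen_openStdSimplex : IsOpen (openStdSimplex ι) := by
  have hpos : IsOpen {c : ι → ℝ | ∀ i, 0 < c i} := by
    simp only [Set.ofPred_forall]
    exact isOpen_iInter_of_finite fun i => isOpen_lt continuous_const (continuous_apply i)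
  have hsum : IsOpen {c : ι → ℝ | ∑ i, c i < 1} := isOpen_lt (by fun_prop) continuous_const
  exact hpos.inter hsum

theorem measurePreserving_units_mul (ε : ι → ℤˣ) :
    MeasurePreserving (fun (x : ι → ℝ) i => ((ε i : ℤ) : ℝ) * x i) := by
  refine volume_preserving_pi (f := fun i t => ((ε i : ℤ) : ℝ) * t) fun i => ?_
  obtain h | h := Int.units_eq_one_or (ε i)
  · simpa [h] using! MeasurePreserving.id volume
  · simpa [h] using Measure.measurePreserving_neg volume

-- The cross-polytope `∑ |x i| < 1`, whose volume is known, contains the `2 ^ d` disjoint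
-- reflections of the simplex.
theorem factorial_mul_volume_openStdSimplex_le :
    (Fintype.card ι).factorial * volume (openStdSimplex ι) ≤ 1 := by
  let reflect (ε : ι → ℤˣ) (x : ι → ℝ) (i : ι) : ℝ := (ε i : ℤ) * x i
  have abs_reflect (ε : ι → ℤˣ) {x : ι → ℝ} (hx : reflect ε x ∈ openStdSimplex ι) (i : ι) :
      |x i| = reflect ε x i := by
    rw [← abs_of_pos (hx.1 i), abs_mul]
    obtain h | h := Int.units_eq_one_or (ε i) <;> simp [h]
  have hmeas (ε : ι → ℤˣ) : MeasurableSet (reflect ε ⁻¹' openStdSimplex ι) :=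
    (isOpen_openStdSimplex.preimage (by fun_prop)).measurableSet
  have hdisj : Pairwise (Function.onFun Disjoint fun ε => reflect ε ⁻¹' openStdSimplex ι) := by
    refine fun ε ε' hne => Set.disjoint_left.mpr fun x hx hx' => hne (funext fun i => ?_)
    have heq : (ε i : ℤ) * x i = (ε' i : ℤ) * x i :=
      (abs_reflect ε hx i).symm.trans (abs_reflect ε' hx' i)
    have hxi : x i ≠ 0 := fun h => (hx.1 i).ne' (by simp [reflect, h])
    exact_mod_cast mul_right_cancel₀ hxi heq
  have hsub : ⋃ ε, reflect ε ⁻¹' openStdSimplex ι ⊆ {x : ι → ℝ | ∑ i, |x i| ^ (1 : ℝ) < 1} := by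
    refine Set.iUnion_subset fun ε x hx => ?_
    simpa only [Real.rpow_one, Set.mem_ofPred_eq, abs_reflect ε hx] using hx.2
  have hvol (ε : ι → ℤˣ) :
      volume (reflect ε ⁻¹' openStdSimplex ι) = volume (openStdSimplex ι) :=
    (measurePreserving_units_mul ε).measure_preimage
      isOpen_openStdSimplex.measurableSet.nullMeasurableSet
  have hcross : volume {x : ι → ℝ | ∑ i, |x i| ^ (1 : ℝ) < 1} =
      2 ^ Fintype.card ι / (Fintype.card ι).factorial := by
    rw [volume_sum_rpow_lt_one ι le_rfl, div_one, div_one, Real.Gamma_nat_eq_factorial,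
      one_add_one_eq_two, Real.Gamma_two, mul_one, ENNReal.ofReal_div_of_pos (by positivity),
      ENNReal.ofReal_natCast, ENNReal.ofReal_pow zero_le_two, ENNReal.ofReal_ofNat]
  have hle := measure_mono (μ := volume) hsub
  rw [measure_iUnion hdisj hmeas, hcross] at hle
  simp only [hvol, tsum_fintype, Finset.sum_const, Finset.card_univ, Fintype.card_fun,
    Fintype.card_units_int, nsmul_eq_mul, Nat.cast_pow, Nat.cast_ofNat, div_eq_mul_inv] at hle
  rw [ENNReal.mul_le_mul_iff_right (by simp) (by simp), ENNReal.le_inv_iff_mul_le] at hle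
  rwa [mul_comm]

theorem intVec_sum_smul (a : ι → ℤ) (b : ι → ι → ℤ) :
    intVec (∑ i, a i • b i) = ∑ i, (a i : ℝ) • intVec (b i) := by
  ext j
  simp

theorem natAbs_det_eq_card_quotient {b : ι → ι → ℤ} (hb : LinearIndependent ℤ b) :
    (Matrix.of b).det.natAbs = Nat.card ((ι → ℤ) ⧸ Submodule.span ℤ (Set.range b)) := by
  rw [← Submodule.natAbs_det_basis_change (Pi.basisFun ℤ ι) _ (Basis.span hb), Basis.det_apply,
    ← Matrix.det_transpose]
  congr 2
  ext i j
  simp [Basis.toMatrix_apply, Basis.span_apply]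

theorem factorial_mul_volume_image_openStdSimplex_le (b : ι → ι → ℤ) :
    (Fintype.card ι).factorial *
        volume ((fun c : ι → ℝ => ∑ i, c i • intVec (b i)) '' openStdSimplex ι) ≤
      ((Matrix.of b).det.natAbs : ENNReal) := by
  let M := (Matrix.of b).map (Int.cast : ℤ → ℝ)
  have hM : (fun c : ι → ℝ => ∑ i, c i • intVec (b i)) = Matrix.toLin' M.transpose := by
    funext c j
    simp [M, Matrix.mulVec, dotProduct, mul_comm]
  have hdet : ENNReal.ofReal |M.det| = ((Matrix.of b).det.natAbs : ENNReal) := by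
    rw [show M.det = ((Matrix.of b).det : ℝ) from (Int.cast_det (Matrix.of b)).symm,
      ← Int.cast_abs, Int.abs_eq_natAbs, Int.cast_natCast, ENNReal.ofReal_natCast]
  rw [hM, Measure.addHaar_image_linearMap, LinearMap.det_toLin', Matrix.det_transpose, hdet,
    mul_left_comm]
  exact mul_le_of_le_one_right' factorial_mul_volume_openStdSimplex_le

theorem exists_finset_sum_le_card_eq_choose (ι : Type*) [Fintype ι] (r : ℕ) :
    ∃ A : Finset (ι → ℕ), A.card = (Fintype.card ι + r).choose (Fintype.card ι) ∧
      ∀ a ∈ A, ∑ i, a i ≤ r := by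
  have hsum {g : Option ι →₀ ℕ} (hg : g ∈ Finset.univ.finsuppAntidiag r) :
      g none + ∑ i, g (some i) = r := by
    simpa [Finset.mem_finsuppAntidiag, Fintype.sum_option] using hg
  refine ⟨(Finset.univ.finsuppAntidiag r).image fun (g : Option ι →₀ ℕ) i => g (some i), ?_, ?_⟩
  · rw [Finset.card_image_of_injOn, Finset.card_finsuppAntidiag_nat_eq_choose, Finset.card_univ,
      Fintype.card_option, Nat.add_right_comm, Nat.add_sub_cancel, Nat.choose_symm_add]
    intro g hg g' hg' h
    have hnone := (hsum hg).trans (hsum hg').symm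
    have hsome (i : ι) : g (some i) = g' (some i) := congrFun h i
    simp only [hsome, add_left_inj] at hnone
    ext (_ | i)
    exacts [hnone, hsome i]
  · simp only [Finset.forall_mem_image]
    intro g hg
    have := hsum hg
    omega

theorem exists_mk_eq_and_fract_coords {b : ι → ι → ℤ}
    (hb : LinearIndependent ℝ fun i => intVec (b i)) (y : ι → ℝ)
    (q : (ι → ℤ) ⧸ Submodule.span ℤ (Set.range b)) :
    ∃ z : ι → ℤ, Submodule.Quotient.mk z = q ∧ ∃ c : ι → ℝ, (∀ i, 0 ≤ c i ∧ c i < 1) ∧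
      ∑ i, c i • intVec (b i) = intVec z + y := by
  obtain ⟨z, rfl⟩ := Submodule.Quotient.mk_surjective _ q
  let bR : Basis ι ℝ (ι → ℝ) := basisOfLinearIndependentOfCardEqFinrank' _ hb (by simp)
  let c := bR.repr (intVec z + y)
  have hc : ∑ i, c i • intVec (b i) = intVec z + y := by
    simpa only [bR, coe_basisOfLinearIndependentOfCardEqFinrank'] using bR.sum_repr (intVec z + y)
  refine ⟨z - ∑ i, ⌊c i⌋ • b i, ?_, fun i => Int.fract (c i),
    fun i => ⟨Int.fract_nonneg _, Int.fract_lt_one _⟩, ?_⟩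
  · rw [Submodule.Quotient.eq, sub_sub_cancel_left]
    exact neg_mem (sum_mem fun i _ => Submodule.smul_mem _ _ (Submodule.subset_span ⟨i, rfl⟩))
  · simp only [Int.fract, sub_smul, Finset.sum_sub_distrib, hc, map_sub, intVec_sum_smul]
    abel

theorem exists_finset_card_eq_det_mul_choose [Nonempty ι] {b : ι → ι → ℤ}
    (hb : LinearIndependent ℝ fun i => intVec (b i)) (y : ι → ℝ) (r : ℕ) :
    ∃ Z : Finset (ι → ℤ),
      Z.card = (Matrix.of b).det.natAbs * (Fintype.card ι + r).choose (Fintype.card ι) ∧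
      ∀ z ∈ Z, ∃ c : ι → ℝ, 0 ≤ c ∧ ∑ i, c i < Fintype.card ι + r ∧
        ∑ i, c i • intVec (b i) = intVec z + y := by
  have hbZ := linearIndependent_of_intVec hb
  have : Finite ((ι → ℤ) ⧸ Submodule.span ℤ (Set.range b)) :=
    Submodule.finiteQuotientOfFreeOfRankEq _ (by simp [finrank_span_eq_card (R := ℤ) hbZ])
  have := Fintype.ofFinite ((ι → ℤ) ⧸ Submodule.span ℤ (Set.range b))
  obtain ⟨A, hA_card, hA⟩ := exists_finset_sum_le_card_eq_choose ι r
  choose rep hrep c hc hc_sum using exists_mk_eq_and_fract_coords hb y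
  let point (q : ((ι → ℤ) ⧸ Submodule.span ℤ (Set.range b)) × (ι → ℕ)) : ι → ℤ :=
    rep q.1 + ∑ i, (q.2 i : ℤ) • b i
  have mk_point (q) : Submodule.Quotient.mk (point q) = q.1 := by
    rw [← hrep q.1, Submodule.Quotient.eq, add_sub_cancel_left]
    exact sum_mem fun i _ => Submodule.smul_mem _ _ (Submodule.subset_span ⟨i, rfl⟩)
  have point_injective : Function.Injective point := by
    rintro ⟨q, a⟩ ⟨q', a'⟩ h
    obtain rfl : q = q' :=
      (mk_point (q, a)).symm.trans ((congrArg _ h).trans (mk_point (q', a')))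
    have hsum : ∑ i, (a i : ℤ) • b i = ∑ i, (a' i : ℤ) • b i := add_left_cancel h
    have := Fintype.linearIndependent_iffₛ.mp hbZ _ _ hsum
    simpa [funext_iff] using this
  refine ⟨(Finset.univ ×ˢ A).image point, ?_, ?_⟩
  · rw [Finset.card_image_of_injective _ point_injective, Finset.card_product, Finset.card_univ,
      hA_card, natAbs_det_eq_card_quotient hbZ, Nat.card_eq_fintype_card]
  · simp only [Finset.forall_mem_image, Finset.mem_product, Finset.mem_univ, true_and]
    rintro ⟨q, a⟩ ha
    have hc_lt : ∑ i, c q i < Fintype.card ι := by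
      simpa using Finset.sum_lt_sum_of_nonempty Finset.univ_nonempty fun i _ => (hc q i).2
    have ha_le : (∑ i, (a i : ℝ)) ≤ r := mod_cast hA a ha
    refine ⟨fun i => c q i + a i, fun i => add_nonneg (hc q i).1 (Nat.cast_nonneg _), ?_, ?_⟩
    · rw [Finset.sum_add_distrib]
      linarith
    · simp only [point, add_smul, Finset.sum_add_distrib, hc_sum, map_add, intVec_sum_smul,
        Int.cast_natCast]
      abel

end LatticeSimplex

section LatticePointsInCone

variable {κ ι : Type*}

theorem ae_isGenericPoint [Finite κ] {E : Type*} [NormedAddCommGroup E] [NormedSpace ℝ E]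
    [MeasurableSpace E] [BorelSpace E] [FiniteDimensional ℝ E] (μ : Measure E)
    [μ.IsAddHaarMeasure] (v : κ → E) :
    ∀ᵐ x ∂μ, IsGenericPoint v x := by
  refine ae_all_iff.mpr fun B => ?_
  by_cases hB : Submodule.span ℝ (v '' B) = ⊤
  · exact ae_of_all _ fun _ _ => hB
  · filter_upwards [measure_eq_zero_iff_ae_notMem.mp (Measure.addHaar_submodule μ _ hB)]
      with x hx hx' using absurd hx' hx

theorem isClosedEmbedding_intVec : IsClosedEmbedding (intVec : (ι → ℤ) → ι → ℝ) :=
  .piMap fun _ => Int.isClosedEmbedding_coe_real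

theorem eventually_intVec_mem_of_add_mem [Finite ι] {C : Set (ι → ℝ)} (hC : IsCompact C) :
    ∀ᶠ y in 𝓝 (0 : ι → ℝ), ∀ z, intVec z + y ∈ C → intVec z ∈ C := by
  have hclosed : IsClosed (intVec '' {z | intVec z ∉ C}) :=
    isClosedEmbedding_intVec.isClosedMap _ (isClosed_discrete _)
  obtain ⟨V, hV, hVC⟩ := compact_open_separated_add_left hC hclosed.isOpen_compl (by
    rintro _ hx ⟨z, hz, rfl⟩
    exact hz hx)
  filter_upwards [neg_mem_nhds_zero (ι → ℝ) hV] with y hy z hz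
  by_contra hz'
  exact hVC (Set.add_mem_add hy hz) ⟨z, hz', by abel⟩

theorem isCompact_cone_inter_le [Fintype κ] {E : Type*} [AddCommGroup E] [Module ℝ E]
    [TopologicalSpace E] [IsTopologicalAddGroup E] [ContinuousSMul ℝ E] {v : κ → E} {ht : Dual ℝ E}
    (hht : ∀ k, 0 < ht (v k)) (L : ℝ) : IsCompact (cone v ∩ {x | ht x ≤ L}) := by
  have hcoeff : IsCompact {c : κ → ℝ | 0 ≤ c ∧ ∑ k, c k * ht (v k) ≤ L} := by
    have hclosed : IsClosed {c : κ → ℝ | ∑ k, c k * ht (v k) ≤ L} :=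
      isClosed_le (by fun_prop) continuous_const
    refine Metric.isCompact_of_isClosed_isBounded (isClosed_Ici.inter hclosed)
      ((Metric.isBounded_Icc 0 fun k => L / ht (v k)).subset ?_)
    refine fun c ⟨hc, hcL⟩ => ⟨hc, fun k => (le_div_iff₀ (hht k)).mpr (le_trans ?_ hcL)⟩
    exact Finset.single_le_sum (f := fun k => c k * ht (v k))
      (fun k _ => mul_nonneg (hc k) (hht k).le) (Finset.mem_univ k)
  convert hcoeff.image (f := fun c => ∑ k, c k • v k) (by fun_prop) using 1
  ext x
  constructor
  · rintro ⟨⟨c, hc, rfl⟩, hx⟩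
    exact ⟨c, ⟨hc, by simpa using hx⟩, rfl⟩
  · rintro ⟨c, ⟨hc, hcL⟩, rfl⟩
    exact ⟨⟨c, hc, rfl⟩, by simpa using hcL⟩

theorem exists_pos_generic_shift [Finite κ] [Finite ι] (v : κ → ι → ℝ) {C : Set (ι → ℝ)}
    (hC : IsCompact C) (i₀ : ι) :
    ∃ y : ι → ℝ, 0 < y i₀ ∧ (∀ z, IsGenericPoint v (intVec z + y)) ∧
      ∀ z, intVec z + y ∈ C → intVec z ∈ C := by
  cases nonempty_fintype ι
  have hgeneric : ∀ᵐ y : ι → ℝ, ∀ z, IsGenericPoint v (intVec z + y) :=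
    ae_all_iff.mpr fun z => (eventually_add_left_iff volume (intVec z)).mpr
      (ae_isGenericPoint volume v)
  obtain ⟨U, hUC, hU, hU0⟩ := eventually_nhds_iff.mp (eventually_intVec_mem_of_add_mem hC)
  have hV : (U ∩ {y | 0 < y i₀}).Nonempty := by
    have hcont : Continuous fun t : ℝ => (Pi.single i₀ t : ι → ℝ) :=
      continuous_single (A := fun _ => ℝ) i₀
    have hsmall : ∀ᶠ t in 𝓝[>] (0 : ℝ), Pi.single i₀ t ∈ U :=
      nhdsWithin_le_nhds ((hcont.tendsto 0).eventually (hU.mem_nhds (by simpa using hU0)))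
    obtain ⟨t, htU, ht⟩ := (hsmall.and self_mem_nhdsWithin).exists
    exact ⟨Pi.single i₀ t, htU, by simpa using ht⟩
  obtain ⟨y, hy, ⟨hyU, hy0⟩⟩ := (Measure.dense_of_ae hgeneric).exists_mem_open
    (hU.inter (isOpen_lt continuous_const (continuous_apply i₀))) hV
  exact ⟨y, hy0, hy, hUC y hyU⟩

variable [Fintype κ] [Fintype ι] {v : κ → ι → ℤ} {i₀ : ι} {B : Finset κ}

theorem exists_finset_add_mem_openCone (hv : ∀ k, v k i₀ = 1)
    (hB : LinearIndepOn ℝ (intVec ∘ v) (B : Set κ))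
    (hspan : Submodule.span ℝ (intVec ∘ v '' B) = ⊤)
    {y : ι → ℝ} (hy : ∀ z, IsGenericPoint (intVec ∘ v) (intVec z + y)) {L : ℕ}
    (hL : Fintype.card ι ≤ L) :
    ∃ Z : Finset (ι → ℤ),
      L.descFactorial (Fintype.card ι) * volume (openCone (intVec ∘ v) B ∩ {x | x i₀ < 1}) ≤
        Z.card ∧
      ∀ z ∈ Z, intVec z + y ∈ openCone (intVec ∘ v) B ∧ (intVec z + y) i₀ < L := by
  have : Nonempty ι := ⟨i₀⟩
  obtain ⟨e, rfl⟩ := exists_map_univ_eq_of_span_eq_top (ι := ι) (by simp) hB hspan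
  have hb : LinearIndependent ℝ fun i => intVec (v (e i)) := by
    rw [Finset.coe_map, Finset.coe_univ, Set.image_univ] at hB
    exact (linearIndepOn_range_iff e.injective _).mp hB
  have height_eq_sum (c : ι → ℝ) : (∑ i, c i • intVec (v (e i))) i₀ = ∑ i, c i := by simp [hv]
  obtain ⟨Z, hZ_card, hZ⟩ :=
    exists_finset_card_eq_det_mul_choose hb y (L - Fintype.card ι)
  rw [Nat.add_sub_cancel' hL] at hZ_card
  refine ⟨Z, ?_, fun z hz => ?_⟩
  · have hsub : openCone (intVec ∘ v) (Finset.univ.map e) ∩ {x | x i₀ < 1} ⊆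
        (fun c : ι → ℝ => ∑ i, c i • intVec (v (e i))) '' openStdSimplex ι := by
      rintro x ⟨hx, hx1⟩
      obtain ⟨c, hc, rfl⟩ := mem_openCone_map_univ_iff.mp hx
      exact ⟨c, ⟨hc, by simpa [hv] using hx1⟩, rfl⟩
    rw [hZ_card, Nat.descFactorial_eq_factorial_mul_choose, Nat.cast_mul, Nat.cast_mul,
      mul_right_comm]
    gcongr
    exact (mul_le_mul_right (measure_mono hsub) _).trans
      (factorial_mul_volume_image_openStdSimplex_le fun i => v (e i))
  · obtain ⟨c, hc, hc_sum, hcz⟩ := hZ z hz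
    refine ⟨mem_openCone_map_univ_iff.mpr ⟨c, ?_, hcz⟩, ?_⟩
    · exact ((hy z).comp e).coeff_pos hb hc hcz
    · rwa [← hcz, height_eq_sum, ← Nat.add_sub_cancel' hL, Nat.cast_add]

theorem volume_cone_inter_le_sum {ω : κ → ℝ} (hv : ∀ k, v k i₀ = 1)
    (hω : IsGenericCost (intVec ∘ v) ω) (T : Set (ι → ℝ)) :
    volume (cone (intVec ∘ v) ∩ T) ≤
      ∑ B with IsRegularCell (intVec ∘ v) ω B, volume (openCone (intVec ∘ v) B ∩ T) := by
  refine le_trans (measure_mono_ae ?_) (measure_biUnion_finset_le _ _)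
  filter_upwards [ae_isGenericPoint volume (intVec ∘ v)] with x hx ⟨hxv, hxT⟩
  obtain ⟨B, hB, hxB⟩ := hx.exists_isRegularCell hω (ht := LinearMap.proj i₀) (by simp [hv]) hxv
  exact Set.mem_biUnion (by simpa using hB) ⟨hxB, hxT⟩

theorem exists_finset_mem_cone (hv : ∀ k, v k i₀ = 1) {L : ℕ} (hL : Fintype.card ι ≤ L) :
    ∃ Z : Finset (ι → ℤ),
      L.descFactorial (Fintype.card ι) * volume (cone (intVec ∘ v) ∩ {x | x i₀ < 1}) ≤ Z.card ∧
      ∀ z ∈ Z, intVec z ∈ cone (intVec ∘ v) ∧ z i₀ < L := by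
  obtain ⟨ω, hω⟩ := exists_isGenericCost (intVec ∘ v)
  have hht (k : κ) : 0 < (LinearMap.proj i₀ : Dual ℝ (ι → ℝ)) ((intVec ∘ v) k) := by simp [hv]
  obtain ⟨y, hy_pos, hy_generic, hy_mem⟩ :=
    exists_pos_generic_shift (intVec ∘ v) (isCompact_cone_inter_le hht L) i₀
  have exists_cell_points (B : Finset κ) (hB : IsRegularCell (intVec ∘ v) ω B) :=
    exists_finset_add_mem_openCone hv (hB.linearIndepOn hω) hB.1 hy_generic hL
  choose! Z hZ_card hZ using exists_cell_points
  have hdisj : Set.PairwiseDisjoint {B | IsRegularCell (intVec ∘ v) ω B} Z := by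
    refine fun B hB B' hB' hne => Finset.disjoint_left.mpr fun z hz hz' => hne ?_
    exact hB.eq_of_mem_openCone hB' (hZ B hB z hz).1 (hZ B' hB' z hz').1
  refine ⟨({B | IsRegularCell (intVec ∘ v) ω B} : Finset _).biUnion Z, ?_, ?_⟩
  · rw [Finset.card_biUnion (by simpa using hdisj), Nat.cast_sum]
    refine (mul_le_mul_right (volume_cone_inter_le_sum hv hω _) _).trans ?_
    rw [Finset.mul_sum]
    exact Finset.sum_le_sum fun B hB => hZ_card B (by simpa using hB)
  · simp only [Finset.mem_biUnion, Finset.mem_filter_univ]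
    rintro z ⟨B, hB, hz⟩
    obtain ⟨⟨c, hc_pos, hc_zero, hcz⟩, hz_lt⟩ := hZ B hB z hz
    have hc : 0 ≤ c := fun k => by
      by_cases hk : k ∈ B
      exacts [(hc_pos k hk).le, (hc_zero k hk).ge]
    refine ⟨(hy_mem z ⟨⟨c, hc, hcz⟩, hz_lt.le⟩).1, ?_⟩
    simp only [Pi.add_apply, intVec_apply] at hz_lt
    exact_mod_cast (by linarith : (z i₀ : ℝ) < L)

end LatticePointsInCone

section Pyramid

variable {m : ℕ} {P : Set (Fin m → ℝ)} {x : Fin (m + 1) → ℝ}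

theorem mem_pyr_iff (hP : Convex ℝ P) (hne : P.Nonempty) :
    x ∈ pyr P ↔ 0 ≤ x (Fin.last m) ∧ x (Fin.last m) ≤ 1 ∧
      Fin.init x ∈ (1 - x (Fin.last m)) • P := by
  have hbase : Convex ℝ ((fun p => Fin.snoc p (0 : ℝ) : _ → Fin (m + 1) → ℝ) '' P) := by
    refine hP.is_linear_image ⟨fun p q => ?_, fun c p => ?_⟩ <;>
      simp [funext_iff, Fin.forall_fin_succ']
  have hsegment (p : Fin m → ℝ) (θ : ℝ) :
      (1 - θ) • (Fin.snoc 0 1 : Fin (m + 1) → ℝ) + θ • Fin.snoc p 0 =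
        Fin.snoc (θ • p) (1 - θ) := by
    simp [funext_iff, Fin.forall_fin_succ']
  rw [pyr, Set.singleton_union, convexHull_insert (hne.image _), hbase.convexHull_eq]
  simp only [convexJoin_singleton_left, Set.biUnion_image, Set.mem_iUnion, segment_eq_image,
    hsegment]
  constructor
  · rintro ⟨p, hp, θ, ⟨hθ0, hθ1⟩, rfl⟩
    simpa [hθ0, hθ1] using Set.smul_mem_smul_set hp
  · rintro ⟨h0, h1, p, hp, hpx⟩
    refine ⟨p, hp, 1 - x (Fin.last m), ⟨by linarith, by linarith⟩, ?_⟩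
    simp only [hpx, sub_sub_cancel, Fin.snoc_init_self]

theorem mem_smul_pyr_iff (hP : Convex ℝ P) (hne : P.Nonempty) {r : ℝ} (hr : 0 ≤ r) :
    x ∈ r • pyr P ↔ 0 ≤ x (Fin.last m) ∧ x (Fin.last m) ≤ r ∧
      Fin.init x ∈ (r - x (Fin.last m)) • P := by
  obtain rfl | hr := hr.eq_or_lt
  · have hpyr : (pyr P).Nonempty := ⟨_, subset_convexHull ℝ _ (Or.inl rfl)⟩
    rw [Set.zero_smul_set hpyr, Set.mem_zero]
    constructor
    · rintro rfl
      simp [Set.zero_smul_set hne, funext_iff, Fin.init_def]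
    · rintro ⟨h0, h1, hx⟩
      rw [h1.antisymm h0, sub_zero, Set.zero_smul_set hne, Set.mem_zero] at hx
      rw [← Fin.snoc_init_self x, hx, h1.antisymm h0]
      simp [funext_iff, Fin.forall_fin_succ']
  · have hscale : r⁻¹ • Fin.init x = Fin.init (r⁻¹ • x) := rfl
    rw [Set.mem_smul_set_iff_inv_smul_mem₀ hr.ne', mem_pyr_iff hP hne, ← hscale,
      ← Set.mem_smul_set_iff_inv_smul_mem₀ hr.ne', smul_smul, mul_sub, mul_one, Pi.smul_apply,
      smul_eq_mul, mul_inv_cancel_left₀ hr.ne', inv_mul_le_one₀ hr,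
      mul_nonneg_iff_of_pos_left (inv_pos.mpr hr)]

theorem volume_homogenization (hP : MeasurableSet P) :
    volume {x : Fin (m + 1) → ℝ | x (Fin.last m) ∈ Set.Ioo 0 1 ∧
      Fin.init x ∈ x (Fin.last m) • P} = ENNReal.ofReal (1 / (m + 1)) * volume P := by
  let T : Set (ℝ × (Fin m → ℝ)) := {q | q.1 ∈ Set.Ioo 0 1 ∧ q.1⁻¹ • q.2 ∈ P}
  have hT : MeasurableSet T :=
    (measurableSet_Ioo.preimage measurable_fst).inter (hP.preimage (by fun_prop))
  have hpreimage : {x : Fin (m + 1) → ℝ | x (Fin.last m) ∈ Set.Ioo 0 1 ∧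
      Fin.init x ∈ x (Fin.last m) • P} =
      MeasurableEquiv.piFinSuccAbove (fun _ => ℝ) (Fin.last m) ⁻¹' T := by
    ext x
    refine and_congr_right fun hx => ?_
    rw [Set.mem_smul_set_iff_inv_smul_mem₀ hx.1.ne']
    simp [MeasurableEquiv.piFinSuccAbove]
  have hslice (t : ℝ) : volume (Prod.mk t ⁻¹' T) =
      (Set.Ioo 0 1).indicator (fun t => ENNReal.ofReal (t ^ m) * volume P) t := by
    by_cases ht : t ∈ Set.Ioo 0 1
    · have : Prod.mk t ⁻¹' T = t • P := by
        ext x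
        simp [T, ht.1, ht.2, Set.mem_smul_set_iff_inv_smul_mem₀ ht.1.ne']
      rw [Set.indicator_of_mem ht, this, Measure.addHaar_smul_of_nonneg _ ht.1.le, finrank_fin_fun]
    · rw [Set.indicator_of_notMem ht]
      exact measure_mono_null (fun x hx => ht hx.1) measure_empty
  have hintegral : ∫⁻ t in Set.Ioo (0 : ℝ) 1, ENNReal.ofReal (t ^ m) =
      ENNReal.ofReal (1 / (m + 1)) := by
    rw [← ofReal_integral_eq_lintegral_ofReal, ← integral_Ioc_eq_integral_Ioo,
      ← intervalIntegral.integral_of_le zero_le_one, integral_pow]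
    · simp
    · exact ((continuous_pow m).integrableOn_Icc (a := 0) (b := 1)).mono_set
        Set.Ioo_subset_Icc_self
    · filter_upwards [ae_restrict_mem measurableSet_Ioo] with t ht using pow_nonneg ht.1.le _
  rw [hpreimage, (volume_preserving_piFinSuccAbove (fun _ => ℝ) (Fin.last m)).measure_preimage
    hT.nullMeasurableSet, Measure.volume_eq_prod, Measure.prod_apply hT]
  simp only [hslice]
  rw [lintegral_indicator measurableSet_Ioo, lintegral_mul_const _ (by fun_prop), hintegral]

theorem convexHull_range_eq_image_stdSimplex {κ E : Type*} [Fintype κ] [AddCommGroup E]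
    [Module ℝ E] (w : κ → E) :
    convexHull ℝ (Set.range w) = Fintype.linearCombination ℝ w '' stdSimplex ℝ κ := by
  rw [← convexHull_basis_eq_stdSimplex, LinearMap.image_convexHull, ← Set.range_comp]
  congr 2
  ext k
  simp [Fintype.linearCombination_apply]

theorem mem_cone_snoc_one_iff {κ : Type*} [Fintype κ] [Nonempty κ] {w : κ → Fin m → ℝ} :
    x ∈ cone (fun k => (Fin.snoc (w k) 1 : Fin (m + 1) → ℝ)) ↔
      0 ≤ x (Fin.last m) ∧ Fin.init x ∈ x (Fin.last m) • convexHull ℝ (Set.range w) := by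
  have hsum (c : κ → ℝ) : ∑ k, c k • (Fin.snoc (w k) 1 : Fin (m + 1) → ℝ) = x ↔
      ∑ k, c k • w k = Fin.init x ∧ ∑ k, c k = x (Fin.last m) := by
    simp [funext_iff, Fin.forall_fin_succ', Fin.init_def]
  simp only [cone, Set.mem_ofPred_eq, hsum]
  constructor
  · rintro ⟨c, hc, hinit, hlast⟩
    have hnonneg : 0 ≤ x (Fin.last m) := hlast ▸ Finset.sum_nonneg fun k _ => hc k
    refine ⟨hnonneg, ?_⟩
    obtain h0 | hpos := hnonneg.eq_or_lt
    · rw [← h0, Set.zero_smul_set (Set.range_nonempty w).convexHull, Set.mem_zero, ← hinit]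
      rw [← h0, Finset.sum_eq_zero_iff_of_nonneg fun k _ => hc k] at hlast
      exact Finset.sum_eq_zero fun k hk => by rw [hlast k hk, zero_smul]
    · rw [Set.mem_smul_set_iff_inv_smul_mem₀ hpos.ne', ← hinit, ← hlast]
      exact Finset.univ.centerMass_mem_convexHull (fun k _ => hc k) (hlast ▸ hpos)
        fun k _ => Set.mem_range_self k
  · rintro ⟨h0, p, hp, hpx⟩
    rw [convexHull_range_eq_image_stdSimplex] at hp
    obtain ⟨a, ⟨ha_nonneg, ha_sum⟩, rfl⟩ := hp
    refine ⟨x (Fin.last m) • a, smul_nonneg h0 ha_nonneg, ?_, ?_⟩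
    · simp [← hpx, Finset.smul_sum, mul_smul, Fintype.linearCombination_apply]
    · simp [← Finset.mul_sum, ha_sum]

theorem pow_mul_factorial_le_pow_mul_descFactorial {d L : ℕ} (h : d ≤ L) :
    L ^ d * d.factorial ≤ d ^ d * L.descFactorial d := by
  calc L ^ d * d.factorial = ∏ i ∈ Finset.range d, L * (d - i) := by
        rw [Finset.prod_mul_distrib, Finset.prod_const, Finset.card_range,
          ← Nat.descFactorial_eq_prod_range, Nat.descFactorial_self]
    _ ≤ ∏ i ∈ Finset.range d, d * (L - i) := Finset.prod_le_prod' fun i _ => by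
        rw [Nat.mul_sub, Nat.mul_sub, mul_comm L d]
        exact Nat.sub_le_sub_left (Nat.mul_le_mul_right i h) _
    _ = d ^ d * L.descFactorial d := by
        rw [Finset.prod_mul_distrib, Finset.prod_const, Finset.card_range,
          ← Nat.descFactorial_eq_prod_range]

theorem div_exp_one_pow_le_descFactorial {d L : ℕ} (h : d ≤ L) :
    (L / Real.exp 1) ^ d ≤ L.descFactorial d := by
  have hfac : (0 : ℝ) < d.factorial := mod_cast d.factorial_pos
  have hexp : (d : ℝ) ^ d ≤ Real.exp 1 ^ d * d.factorial := by
    rw [Real.exp_one_pow, ← div_le_iff₀ hfac]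
    exact Real.pow_div_factorial_le_exp _ d.cast_nonneg d
  rw [div_pow, div_le_iff₀ (by positivity), ← mul_le_mul_iff_left₀ hfac]
  calc (L : ℝ) ^ d * d.factorial ≤ d ^ d * L.descFactorial d :=
        mod_cast pow_mul_factorial_le_pow_mul_descFactorial h
    _ ≤ Real.exp 1 ^ d * d.factorial * L.descFactorial d := by gcongr
    _ = L.descFactorial d * Real.exp 1 ^ d * d.factorial := by ring

end Pyramid

section LatticePolytope

/-- A lattice polytope in `ℝ^ι`: the convex hull of finitely many points of `ℤ^ι`. -/
def IsLatticePolytope {ι : Type*} (P : Set (ι → ℝ)) : Prop :=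
  ∃ V : Finset (ι → ℤ), P = convexHull ℝ (intVec '' V)

/-- The exponent vector of a monomial as a point of `ℝ^σ`. -/
def natVec {σ : Type*} : (σ →₀ ℕ) →+ (σ → ℝ) where
  toFun u i := u i
  map_zero' := by ext; simp
  map_add' u w := by ext; simp

@[simp]
theorem natVec_apply {σ : Type*} (u : σ →₀ ℕ) (i : σ) : natVec u i = u i := rfl

theorem exists_natVec_eq_intVec {σ : Type*} [Finite σ] {z : σ → ℤ} (hz : 0 ≤ z) :
    ∃ u : σ →₀ ℕ, natVec u = intVec z := by
  refine ⟨Finsupp.equivFunOnFinite.symm fun i => (z i).toNat, funext fun i => ?_⟩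
  simpa using mod_cast Int.toNat_of_nonneg (hz i)

theorem IsLatticePolytope.convex {ι : Type*} {P : Set (ι → ℝ)} (hP : IsLatticePolytope P) :
    Convex ℝ P := by
  obtain ⟨V, rfl⟩ := hP
  exact convex_convexHull ℝ _

theorem IsLatticePolytope.isCompact {ι : Type*} {P : Set (ι → ℝ)} (hP : IsLatticePolytope P) :
    IsCompact P := by
  obtain ⟨V, rfl⟩ := hP
  exact (V.finite_toSet.image _).isCompact_convexHull ℝ

variable {m lam : ℕ} {P : Set (Fin m → ℝ)}

theorem IsLatticePolytope.exists_finset_mem_smul (hP : IsLatticePolytope P) (hne : P.Nonempty)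
    (hlam : m ≤ lam) :
    ∃ Z : Finset (Fin (m + 1) → ℤ),
      (lam + 1).descFactorial (m + 1) * (ENNReal.ofReal (1 / (m + 1)) * volume P) ≤ Z.card ∧
      ∀ z ∈ Z, 0 ≤ z (Fin.last m) ∧ z (Fin.last m) ≤ lam ∧
        intVec (Fin.init z) ∈ (z (Fin.last m) : ℝ) • P := by
  have hmeas := hP.isCompact.measurableSet
  obtain ⟨V, rfl⟩ := hP
  have : Nonempty V := by
    simpa [Finset.Nonempty] using convexHull_nonempty_iff.mp hne
  have hhull : convexHull ℝ (intVec '' V) =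
      convexHull ℝ (Set.range fun k : V => intVec (k : Fin m → ℤ)) := by
    rw [Set.image_eq_range]
    rfl
  let v (k : V) : Fin (m + 1) → ℤ := Fin.snoc (k : Fin m → ℤ) 1
  have hv : intVec ∘ v = fun k : V => (Fin.snoc (intVec (k : Fin m → ℤ)) 1 : Fin (m + 1) → ℝ) := by
    simp [v, funext_iff, Fin.forall_fin_succ']
  obtain ⟨Z, hZ_card, hZ⟩ := exists_finset_mem_cone (v := v) (i₀ := Fin.last m) (by simp [v])
    (L := lam + 1) (by simpa using hlam)
  simp only [hv, mem_cone_snoc_one_iff, ← hhull] at hZ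
  refine ⟨Z, le_trans ?_ hZ_card, fun z hz => ?_⟩
  · rw [← volume_homogenization hmeas, Fintype.card_fin, hv]
    gcongr
    rintro x ⟨⟨hx0, hx1⟩, hx⟩
    exact ⟨mem_cone_snoc_one_iff.mpr ⟨hx0.le, hhull ▸ hx⟩, hx1⟩
  · obtain ⟨⟨hz_nonneg, hz_mem⟩, hz_lt⟩ := hZ z hz
    rw [intVec_apply, Int.cast_nonneg_iff] at hz_nonneg
    exact ⟨hz_nonneg, by push_cast at hz_lt; omega, hz_mem⟩

theorem IsLatticePolytope.exists_finset_intVec_mem_smul_pyr (hP : IsLatticePolytope P)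
    (hne : P.Nonempty) (hlam : m ≤ lam) :
    ∃ Z : Finset (Fin (m + 1) → ℤ),
      (lam + 1).descFactorial (m + 1) * (ENNReal.ofReal (1 / (m + 1)) * volume P) ≤ Z.card ∧
      ∀ z ∈ Z, intVec z ∈ (lam : ℝ) • pyr P := by
  obtain ⟨Z, hZ_card, hZ⟩ := hP.exists_finset_mem_smul hne hlam
  let reflect (z : Fin (m + 1) → ℤ) : Fin (m + 1) → ℤ :=
    Fin.snoc (Fin.init z) (lam - z (Fin.last m))
  have reflect_injective : Function.Injective reflect := fun z z' h => by
    obtain ⟨hinit, hlast⟩ := Fin.snoc_inj.mp h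
    rw [← Fin.snoc_init_self z, ← Fin.snoc_init_self z', hinit, sub_right_inj.mp hlast]
  refine ⟨Z.image reflect, by rwa [Finset.card_image_of_injective _ reflect_injective], ?_⟩
  simp only [Finset.forall_mem_image, mem_smul_pyr_iff hP.convex hne lam.cast_nonneg]
  intro z hz
  obtain ⟨hz_nonneg, hz_le, hz_mem⟩ := hZ z hz
  have hinit : Fin.init (intVec (reflect z)) = intVec (Fin.init z) := by
    ext j
    simp [reflect, Fin.init_def]
  have hlast : intVec (reflect z) (Fin.last m) = lam - z (Fin.last m) := by simp [reflect]
  rw [hinit, hlast, sub_sub_cancel]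
  exact ⟨sub_nonneg.mpr (mod_cast hz_le), sub_le_self _ (mod_cast hz_nonneg), hz_mem⟩

theorem natCast_lt_descFactorial_mul {d n L : ℕ} {r : ℝ} (hd : 0 < d) (hr : 0 < r)
    (hL : Real.exp 1 * (d * n / r) ^ (1 / d : ℝ) < L) (hdL : d ≤ L) :
    (n : ℝ) < L.descFactorial d * (1 / d * r) := by
  have hbase : 0 ≤ d * n / r := by positivity
  have hlt : d * n / r < (L / Real.exp 1) ^ d := by
    rw [← lt_div_iff₀' (Real.exp_pos 1)] at hL
    calc d * n / r = ((d * n / r) ^ (1 / d : ℝ)) ^ d := by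
          rw [one_div, Real.rpow_inv_natCast_pow hbase hd.ne']
      _ < (L / Real.exp 1) ^ d := by gcongr
  have := hlt.trans_le (div_exp_one_pow_le_descFactorial hdL)
  rw [div_lt_iff₀ hr] at this
  field_simp
  linarith

theorem IsLatticePolytope.exists_finset_natVec_mem_smul_pyr (hP : IsLatticePolytope P)
    (hfull : (interior P).Nonempty) (hpos : ∀ x ∈ P, 0 ≤ x) (hlam : m ≤ lam) {n : ℕ}
    (hlam_exp : Real.exp 1 * ((m + 1) * n / volume.real P) ^ (1 / (m + 1) : ℝ) ≤ lam) :
    ∃ U : Finset (Fin (m + 1) →₀ ℕ), n < U.card ∧ ∀ u ∈ U, natVec u ∈ (lam : ℝ) • pyr P := by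
  have hne : P.Nonempty := hfull.mono interior_subset
  obtain ⟨Z, hZ_card, hZ⟩ := hP.exists_finset_intVec_mem_smul_pyr hne hlam
  have hZ_nonneg (z : Fin (m + 1) → ℤ) (hz : z ∈ Z) : 0 ≤ z := by
    obtain ⟨hlast, hle, p, hp, hpz⟩ :=
      (mem_smul_pyr_iff hP.convex hne lam.cast_nonneg).mp (hZ z hz)
    have hinit (j : Fin m) : 0 ≤ intVec z j.castSucc :=
      (mul_nonneg (sub_nonneg.mpr hle) (hpos p hp j)).trans_eq (congrFun hpz j)
    rw [intVec_apply, Int.cast_nonneg_iff] at hlast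
    exact Fin.lastCases hlast fun j => Int.cast_nonneg_iff.mp (hinit j)
  have hvol : 0 < volume.real P :=
    ENNReal.toReal_pos (Measure.measure_pos_of_nonempty_interior volume hfull).ne'
      hP.isCompact.measure_lt_top.ne
  have hn : n < Z.card := by
    have hlt := natCast_lt_descFactorial_mul (n := n) (L := lam + 1) m.succ_pos hvol
      (by push_cast; linarith) (by omega)
    have hle := ENNReal.toReal_mono (ENNReal.natCast_ne_top _) hZ_card
    rw [ENNReal.toReal_mul, ENNReal.toReal_mul, ENNReal.toReal_ofReal (by positivity),
      ENNReal.toReal_natCast, ENNReal.toReal_natCast, ← Nat.cast_succ] at hle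
    exact_mod_cast hlt.trans_le hle
  choose! u hu using fun z hz => exists_natVec_eq_intVec (hZ_nonneg z hz)
  refine ⟨Z.image u, ?_, ?_⟩
  · rwa [Finset.card_image_of_injOn]
    intro z hz z' hz' h
    exact isClosedEmbedding_intVec.injective (by rw [← hu z hz, ← hu z' hz', h])
  · simp only [Finset.forall_mem_image]
    exact fun z hz => hu z hz ▸ hZ z hz

end LatticePolytope

section NonzeroCount

open MvPolynomial

theorem exists_eq_monomial_mul_degreeOf {σ : Type*} [Finite σ] {R : Type*} [CommSemiring R]
    {g : MvPolynomial σ R} (hg : g ≠ 0) :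
    ∃ (a : σ →₀ ℕ) (h : MvPolynomial σ R), g = monomial a 1 * h ∧
      ∀ i, ∃ u ∈ g.support, ∃ u' ∈ g.support, u i = degreeOf i h + u' i := by
  have hne : g.support.Nonempty := support_nonempty.mpr hg
  let a : σ →₀ ℕ := Finsupp.equivFunOnFinite.symm fun i => g.support.inf' hne fun u => u i
  have ha (u) (hu : u ∈ g.support) : a ≤ u := fun i => Finset.inf'_le _ hu
  have hfactor : g = monomial a 1 * g.divMonomial a := by
    ext u
    rw [coeff_monomial_mul']
    split_ifs with h
    · rw [coeff_divMonomial, one_mul, add_tsub_cancel_of_le h]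
    · exact notMem_support_iff.mp fun hu => h (ha u hu)
  refine ⟨a, g.divMonomial a, hfactor, fun i => ?_⟩
  have hdiv : (g.divMonomial a).support.Nonempty :=
    support_nonempty.mpr fun h => hg (by rw [hfactor, h, mul_zero])
  obtain ⟨w, hw, hw_deg⟩ := Finset.exists_mem_eq_sup _ hdiv fun u => u i
  obtain ⟨u', hu', hu'_min⟩ := Finset.exists_mem_eq_inf' hne fun u => u i
  refine ⟨a + w, ?_, u', hu', ?_⟩
  · rwa [MvPolynomial.mem_support_iff, coeff_divMonomial, ← MvPolynomial.mem_support_iff] at hw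
  · rw [degreeOf_eq_sup, hw_deg, ← hu'_min, add_comm]
    rfl

variable {R : Type*} [CommRing R] [IsDomain R]

theorem card_sub_natDegree_le_card_filter_eval_ne_zero {q : Polynomial R} (hq : q ≠ 0)
    (S : Finset R) : S.card - q.natDegree ≤ {a ∈ S | q.eval a ≠ 0}.card := by
  have hroots : {a ∈ S | q.eval a = 0}.card ≤ q.natDegree :=
    Polynomial.card_le_degree_of_subset_roots fun a ha =>
      (Polynomial.mem_roots hq).mpr (Finset.mem_filter.mp ha).2
  have hsum : {a ∈ S | q.eval a = 0}.card + {a ∈ S | q.eval a ≠ 0}.card = S.card :=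
    Finset.card_filter_add_card_filter_not _
  omega

theorem prod_card_sub_degreeOf_le_card_filter_eval_ne_zero {m : ℕ} {g : MvPolynomial (Fin m) R}
    (hg : g ≠ 0) (S : Fin m → Finset R) :
    ∏ i, ((S i).card - degreeOf i g) ≤ {x ∈ Fintype.piFinset S | eval x g ≠ 0}.card := by
  induction m with
  | zero =>
    obtain ⟨c, rfl⟩ := C_surjective (Fin 0) g
    have hc : c ≠ 0 := by simpa using hg
    simp [hc]
  | succ m ih =>
    set q := finSuccEquiv R m g with hq_def
    have hq : q ≠ 0 := by simpa [q] using hg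
    set G := {x ∈ Fintype.piFinset fun i => S (Fin.succ i) | eval x q.leadingCoeff ≠ 0}
    have hG : ∏ i : Fin m, ((S i.succ).card - degreeOf i.succ g) ≤ G.card := by
      refine le_trans ?_ (ih (Polynomial.leadingCoeff_ne_zero.mpr hq) fun i => S i.succ)
      exact Finset.prod_le_prod' fun i _ =>
        Nat.sub_le_sub_left (degreeOf_coeff_finSuccEquiv g i _) _
    have hfiber (x) (hx : x ∈ G) : (S 0).card - degreeOf 0 g ≤
        {a ∈ S 0 | (q.map (eval x)).eval a ≠ 0}.card := by
      have hlead : (q.map (eval x)).coeff q.natDegree ≠ 0 := by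
        simpa using (Finset.mem_filter.mp hx).2
      have hmap : q.map (eval x) ≠ 0 := fun h => hlead (by simp [h])
      refine le_trans (Nat.sub_le_sub_left ?_ _)
        (card_sub_natDegree_le_card_filter_eval_ne_zero hmap (S 0))
      exact Polynomial.natDegree_map_le.trans (natDegree_finSuccEquiv g).le
    calc ∏ i, ((S i).card - degreeOf i g)
        ≤ G.card * ((S 0).card - degreeOf 0 g) := by
          rw [Fin.prod_univ_succ, mul_comm]
          exact Nat.mul_le_mul_right _ hG
      _ ≤ (G.sigma fun x => {a ∈ S 0 | (q.map (eval x)).eval a ≠ 0}).card := by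
          rw [Finset.card_sigma, ← smul_eq_mul]
          exact Finset.card_nsmul_le_sum _ _ _ hfiber
      _ ≤ {x ∈ Fintype.piFinset S | eval x g ≠ 0}.card := by
          refine Finset.card_le_card_of_injOn (fun z => Fin.cons z.2 z.1) ?_ ?_
          · rintro ⟨x, a⟩ hz
            simp_all [G, Fin.forall_fin_succ, eval_eq_eval_mv_eval']
          · rintro ⟨x, a⟩ - ⟨x', a'⟩ - h
            obtain ⟨rfl, rfl⟩ := Fin.cons_inj.mp h
            rfl

theorem prod_card_sub_le_card_filter_eval_ne_zero {m : ℕ} {g : MvPolynomial (Fin m) R}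
    (hg : g ≠ 0) {S : Fin m → Finset R} (hS : ∀ i, ∀ c ∈ S i, c ≠ 0) {D : Fin m → ℝ}
    (hDS : ∀ i, D i ≤ (S i).card)
    (hD : ∀ u ∈ g.support, ∀ u' ∈ g.support, ∀ i, (u i : ℝ) - u' i ≤ D i) :
    ∏ i, ((S i).card - D i) ≤ {x ∈ Fintype.piFinset S | eval x g ≠ 0}.card := by
  obtain ⟨a, h, hgh, hdeg⟩ := exists_eq_monomial_mul_degreeOf hg
  have hh : h ≠ 0 := right_ne_zero_of_mul (hgh ▸ hg)
  have hdeg_le (i : Fin m) : (degreeOf i h : ℝ) ≤ D i := by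
    obtain ⟨u, hu, u', hu', huu'⟩ := hdeg i
    simpa [huu'] using hD u hu u' hu' i
  have heval (x) (hx : x ∈ Fintype.piFinset S) : eval x g ≠ 0 ↔ eval x h ≠ 0 := by
    have hmonomial : (a.prod fun i e => x i ^ e) ≠ 0 := Finset.prod_ne_zero_iff.mpr fun i _ =>
      pow_ne_zero _ (hS i _ (Fintype.mem_piFinset.mp hx i))
    rw [hgh, eval_mul, eval_monomial, one_mul, mul_ne_zero_iff_left hmonomial]
  rw [Finset.filter_congr heval]
  calc ∏ i, ((S i).card - D i)
      ≤ ∏ i, (((S i).card - degreeOf i h : ℕ) : ℝ) :=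
        Finset.prod_le_prod (fun i _ => sub_nonneg.mpr (hDS i)) fun i _ =>
          (sub_le_sub_left (hdeg_le i) _).trans
            (sub_le_iff_le_add.mpr (mod_cast le_tsub_add))
    _ ≤ _ := mod_cast prod_card_sub_degreeOf_le_card_filter_eval_ne_zero hh S

end NonzeroCount

section Interpolation

open MvPolynomial

theorem exists_ne_zero_forall_eval_eq_zero {R σ κ : Type*} [CommRing R] [Nontrivial R] [Fintype κ]
    {U : Finset (σ →₀ ℕ)} (hU : Fintype.card κ < U.card) (x : κ → σ → R) :
    ∃ Q : MvPolynomial σ R, Q ≠ 0 ∧ Q.support ⊆ U ∧ ∀ k, eval (x k) Q = 0 := by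
  let evaluation : restrictSupport R (U : Set (σ →₀ ℕ)) →ₗ[R] κ → R :=
    (LinearMap.pi fun k => (aeval (x k)).toLinearMap) ∘ₗ Submodule.subtype _
  have hnot_injective : ¬ Function.Injective evaluation := fun hinj => by
    have hle := LinearMap.finrank_le_finrank_of_injective hinj
    rw [finrank_eq_nat_card_basis (basisRestrictSupport R _), finrank_fintype_fun_eq_card] at hle
    simp only [Nat.card_eq_fintype_card, SetLike.coe_sort_coe, Fintype.card_coe] at hle
    omega
  rw [injective_iff_map_eq_zero] at hnot_injective
  push Not at hnot_injective
  obtain ⟨Q, hQ_eval, hQ⟩ := hnot_injective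
  exact ⟨Q, by simpa using hQ, (mem_restrictSupport_iff R).mp Q.2, fun k => congrFun hQ_eval k⟩

end Interpolation

section PolytopeSpace

open MvPolynomial

/-- The space `L(P)` of polynomials all of whose exponent vectors lie in `P`. -/
noncomputable def polytopeSpace {σ : Type*} (R : Type*) [CommSemiring R] (P : Set (σ → ℝ)) :
    Submodule R (MvPolynomial σ R) :=
  restrictSupport R (natVec ⁻¹' P)

/-- The length of the projection of `P` onto the `j`-th coordinate axis. -/
noncomputable def width {ι : Type*} (P : Set (ι → ℝ)) (j : ι) : ℝ :=
  sSup ((fun x => x j) '' P) - sInf ((fun x => x j) '' P)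

section Semiring

variable {σ R : Type*} [CommSemiring R] {P T : Set (σ → ℝ)} {f g : MvPolynomial σ R}

theorem mem_polytopeSpace_iff : f ∈ polytopeSpace R P ↔ ∀ u ∈ f.support, natVec u ∈ P := Iff.rfl

theorem monomial_mem_polytopeSpace {u : σ →₀ ℕ} (hu : natVec u ∈ P) (c : R) :
    monomial u c ∈ polytopeSpace R P :=
  (monomial_mem_restrictSupport R).mpr (Or.inl hu)

theorem mul_mem_polytopeSpace (hf : f ∈ polytopeSpace R P) (hg : g ∈ polytopeSpace R T) :
    f * g ∈ polytopeSpace R (P + T) := by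
  have hsub : natVec ⁻¹' P + natVec ⁻¹' T ⊆ natVec ⁻¹' (P + T) := by
    rintro _ ⟨u, hu, u', hu', rfl⟩
    rw [Set.mem_preimage, map_add]
    exact Set.add_mem_add hu hu'
  exact restrictSupport_mono R hsub (restrictSupport_add R _ _ ▸ Submodule.mul_mem_mul hf hg)

theorem pow_mem_polytopeSpace (hP : Convex ℝ P) (hne : P.Nonempty) (hf : f ∈ polytopeSpace R P)
    (k : ℕ) : f ^ k ∈ polytopeSpace R ((k : ℝ) • P) := by
  induction k with
  | zero =>
    rw [pow_zero, Nat.cast_zero, Set.zero_smul_set hne, ← C_1, C_apply]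
    exact monomial_mem_polytopeSpace (map_zero natVec) 1
  | succ k ih =>
    rw [pow_succ, Nat.cast_succ, hP.add_smul k.cast_nonneg zero_le_one, one_smul]
    exact mul_mem_polytopeSpace ih hf

theorem aeval_snoc_mem_polytopeSpace {m : ℕ} {P : Set (Fin m → ℝ)} (hP : Convex ℝ P)
    (hne : P.Nonempty) {r : ℝ} (hr : 0 ≤ r) {f : MvPolynomial (Fin m) R}
    (hf : f ∈ polytopeSpace R P) {Q : MvPolynomial (Fin (m + 1)) R}
    (hQ : Q ∈ polytopeSpace R (r • pyr P)) :
    aeval (Fin.snoc X f : Fin (m + 1) → MvPolynomial (Fin m) R) Q ∈ polytopeSpace R (r • P) := by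
  rw [aeval_def, eval₂_eq']
  refine Submodule.sum_mem _ fun u hu => ?_
  obtain ⟨-, hle, hmem⟩ := (mem_smul_pyr_iff hP hne hr).mp (mem_polytopeSpace_iff.mp hQ u hu)
  rw [natVec_apply] at hle hmem
  have hterm : algebraMap R (MvPolynomial (Fin m) R) (coeff u Q) *
      ∏ i, (Fin.snoc X f : Fin (m + 1) → MvPolynomial (Fin m) R) i ^ u i =
        monomial (Finsupp.equivFunOnFinite.symm fun j => u j.castSucc) (coeff u Q) *
          f ^ u (Fin.last m) := by
    simp [Fin.prod_univ_castSucc, monomial_eq, Finsupp.prod_fintype, mul_assoc]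
  have hdilate : r • P = (r - u (Fin.last m)) • P + (u (Fin.last m) : ℝ) • P := by
    rw [← hP.add_smul (sub_nonneg.mpr hle) (Nat.cast_nonneg _), sub_add_cancel]
  rw [hterm, hdilate]
  exact mul_mem_polytopeSpace (monomial_mem_polytopeSpace hmem _)
    (pow_mem_polytopeSpace hP hne hf _)

theorem eval_aeval_snoc {m : ℕ} (x : Fin m → R) (f : MvPolynomial (Fin m) R)
    (Q : MvPolynomial (Fin (m + 1)) R) :
    eval x (aeval (Fin.snoc X f : Fin (m + 1) → MvPolynomial (Fin m) R) Q) =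
      eval (Fin.snoc x (eval x f)) Q := by
  have hsnoc : (fun i => aeval x ((Fin.snoc X f : Fin (m + 1) → MvPolynomial (Fin m) R) i)) =
      Fin.snoc x (aeval x f) := by
    simp [funext_iff, Fin.forall_fin_succ']
  simp only [← coe_aeval_eq_eval, RingHom.coe_coe, comp_aeval_apply, hsnoc]

theorem sub_le_mul_width (hP : IsCompact P) {r : ℝ} (hr : 0 ≤ r)
    (hf : f ∈ polytopeSpace R (r • P)) {u u' : σ →₀ ℕ} (hu : u ∈ f.support) (hu' : u' ∈ f.support)
    (i : σ) : (u i : ℝ) - u' i ≤ r * width P i := by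
  obtain ⟨z, hz, hzu⟩ := mem_polytopeSpace_iff.mp hf u hu
  obtain ⟨z', hz', hzu'⟩ := mem_polytopeSpace_iff.mp hf u' hu'
  have himage : IsCompact ((fun x => x i) '' P) := hP.image (continuous_apply i)
  have hsup : z i ≤ sSup ((fun x => x i) '' P) := le_csSup himage.bddAbove ⟨z, hz, rfl⟩
  have hinf : sInf ((fun x => x i) '' P) ≤ z' i := csInf_le himage.bddBelow ⟨z', hz', rfl⟩
  calc (u i : ℝ) - u' i = r * (z i - z' i) := by
        rw [← natVec_apply, ← natVec_apply u', ← hzu, ← hzu', mul_sub]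
        rfl
    _ ≤ r * width P i := mul_le_mul_of_nonneg_left (sub_le_sub hsup hinf) hr

end Semiring

variable {R : Type*} [CommRing R] [IsDomain R] {m : ℕ} {P : Set (Fin m → ℝ)} {κ : Type*}
  [Fintype κ] {p : κ → Fin m → R} {S : Fin m → Finset R}

theorem aeval_snoc_eq_zero_of_card_sub_prod_lt (hconv : Convex ℝ P) (hcompact : IsCompact P)
    (hne : P.Nonempty) (hS : ∀ j, ∀ c ∈ S j, c ≠ 0) (hbox : ↑(Fintype.piFinset S) ⊆ Set.range p)
    {r : ℝ} (hr : 0 ≤ r) (hwidth : ∀ j, r * width P j ≤ (S j).card)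
    {Q : MvPolynomial (Fin (m + 1)) R} (hQ : Q ∈ polytopeSpace R (r • pyr P)) {y : κ → R}
    (hQ_eval : ∀ k, eval (Fin.snoc (p k) (y k)) Q = 0) {f : MvPolynomial (Fin m) R}
    (hf : f ∈ polytopeSpace R P)
    (hagree : Fintype.card κ - ∏ j, ((S j).card - r * width P j) <
      ({k | eval (p k) f = y k} : Finset κ).card) :
    aeval (Fin.snoc X f : Fin (m + 1) → MvPolynomial (Fin m) R) Q = 0 := by
  set g := aeval (Fin.snoc X f : Fin (m + 1) → MvPolynomial (Fin m) R) Q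
  by_contra hg
  have hg_mem : g ∈ polytopeSpace R (r • P) := aeval_snoc_mem_polytopeSpace hconv hne hr hf hQ
  have hnonzero := prod_card_sub_le_card_filter_eval_ne_zero hg hS hwidth
    fun u hu u' hu' i => sub_le_mul_width hcompact hr hg_mem hu hu' i
  have hdisagree : {x ∈ Fintype.piFinset S | eval x g ≠ 0}.card ≤
      ({k | eval (p k) f ≠ y k} : Finset κ).card := by
    refine Finset.card_le_card_of_surjOn p fun x hx => ?_
    obtain ⟨hxS, hgx⟩ := Finset.mem_filter.mp hx
    obtain ⟨k, rfl⟩ := hbox hxS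
    refine ⟨k, Finset.mem_filter.mpr ⟨Finset.mem_univ k, fun hfk => hgx ?_⟩, rfl⟩
    rw [eval_aeval_snoc, hfk, hQ_eval k]
  have htotal : ({k | eval (p k) f = y k} : Finset κ).card +
      ({k | eval (p k) f ≠ y k} : Finset κ).card = Fintype.card κ :=
    Finset.card_filter_add_card_filter_not _
  rify at hdisagree htotal
  linarith

end PolytopeSpace

end PolytopeCode

open PolytopeCode MvPolynomial MeasureTheory in
theorem basic_list_decoding_explicit_general {R : Type*} [CommRing R] [IsDomain R] {m : ℕ}
    {P : Set (Fin m → ℝ)} (hP : IsLatticePolytope P)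
    (hPfull : (interior P).Nonempty) (hPpos : ∀ x ∈ P, 0 ≤ x)
    {κ : Type*} [Fintype κ] {p : κ → Fin m → R}
    {S : Fin m → Finset R} (hS : ∀ j, ∀ c ∈ S j, c ≠ 0)
    (hbox : ↑(Fintype.piFinset S) ⊆ Set.range p) {lam : ℕ}
    (hlam_exp : Real.exp 1 * ((m + 1) * Fintype.card κ / volume.real P) ^
      (1 / (m + 1) : ℝ) ≤ lam)
    (hlam_m : m ≤ lam) (hlam_width : ∀ j, lam * width P j ≤ (S j).card) {t : ℕ}
    (ht : Fintype.card κ - ∏ j, ((S j).card - lam * width P j) < t) (y : κ → R) :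
    ∃ Q : MvPolynomial (Fin (m + 1)) R, Q ≠ 0 ∧
      Q ∈ polytopeSpace R ((lam : ℝ) • pyr P) ∧
      (∀ k, eval (Fin.snoc (p k) (y k)) Q = 0) ∧
      ∀ f ∈ polytopeSpace R P,
        t ≤ ({k | eval (p k) f = y k} : Finset κ).card →
          aeval (Fin.snoc X f : Fin (m + 1) → MvPolynomial (Fin m) R) Q = 0 := by
  obtain ⟨U, hU_card, hU⟩ :=
    hP.exists_finset_natVec_mem_smul_pyr hPfull hPpos hlam_m hlam_exp
  obtain ⟨Q, hQ, hQU, hQ_eval⟩ := exists_ne_zero_forall_eval_eq_zero hU_card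
    fun k => (Fin.snoc (p k) (y k) : Fin (m + 1) → R)
  have hQ_mem : Q ∈ polytopeSpace R ((lam : ℝ) • pyr P) :=
    mem_polytopeSpace_iff.mpr fun u hu => hU u (hQU hu)
  refine ⟨Q, hQ, hQ_mem, hQ_eval, fun f hf hagree => ?_⟩
  exact aeval_snoc_eq_zero_of_card_sub_prod_lt hP.convex hP.isCompact
    (hPfull.mono interior_subset) hS hbox lam.cast_nonneg hlam_width hQ_mem hQ_eval hf
    (ht.trans_le (mod_cast hagree))

/-- **Basic list-decoding theorem with explicit parameter choice.**  Let `P ⊆ ℝ^m` be an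
`m`-dimensional lattice polytope in the nonnegative orthant with projection lengths `ℓ_j`, and
let `S = {p_1,…,p_n} ⊆ (F_q^*)^m` be distinct points containing a box `S_1 × ⋯ × S_m` with
`|S_j| = s_j > ℓ_j`.  Set `λ = ⌈e·((m+1)·n / vol(P))^{1/(m+1)}⌉` and assume
`min_j s_j/ℓ_j > λ ≥ m`.  Then for every integer `t > n − ∏_j (s_j − λ·ℓ_j)` and every
`y ∈ F_q^n` there is a nonzero `Q ∈ F_q[X_1,…,X_m,Y]` with support in `λ·Pyr(P) ∩ ℤ^{m+1}`
and `Q(p_j, y_j) = 0` for all `j`, such that every `f ∈ L_q(P)` agreeing with `y` on at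
least `t` indices satisfies `Q(X, f(X)) = 0`. -/
theorem basic_list_decoding_explicit
    (Fq : Type*) [Field Fq] [Fintype Fq]
    (m : ℕ) (hm : 1 ≤ m) (P : Set (Fin m → ℝ))
    (hP : ∃ V : Finset (Fin m → ℤ),
      P = convexHull ℝ ((fun (v : Fin m → ℤ) (j : Fin m) => (v j : ℝ)) '' ↑V))
    (hPfull : (interior P).Nonempty)
    (hPpos : P ⊆ {x | ∀ j, 0 ≤ x j})
    (ℓ : Fin m → ℝ)
    (hℓ : ∀ j, ℓ j = sSup ((fun x => x j) '' P) - sInf ((fun x => x j) '' P))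
    (n : ℕ) (p : Fin n → (Fin m → Fq)) (hp_inj : Function.Injective p)
    (hp0 : ∀ j, ∀ i, p j i ≠ 0)
    (Sbox : Fin m → Finset Fq) (hSbox0 : ∀ j, ∀ c ∈ Sbox j, c ≠ 0)
    (s : Fin m → ℕ) (hs : ∀ j, (Sbox j).card = s j) (hsℓ : ∀ j, ℓ j < s j)
    (hboxS : ∀ q ∈ Fintype.piFinset Sbox, ∃ j : Fin n, p j = q)
    (lam : ℕ)
    (hlam_def : lam = ⌈Real.exp 1 *
      (((m + 1 : ℝ) * n / (MeasureTheory.volume P).toReal) ^ ((1 : ℝ) / (m + 1)))⌉₊)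
    (hlam_m : m ≤ lam)
    (hlam_lt : ∀ j, (lam : ℝ) * ℓ j < s j)
    (t : ℕ)
    (ht_gt : (n : ℝ) - ∏ j, ((s j : ℝ) - lam * ℓ j) < t) :
    ∀ y : Fin n → Fq,
      ∃ Q : MvPolynomial (Fin (m + 1)) Fq, Q ≠ 0 ∧
        (∀ u ∈ Q.support, (fun j => (u j : ℝ)) ∈ (lam : ℝ) • pyr P) ∧
        (∀ j : Fin n, MvPolynomial.eval (Fin.snoc (p j) (y j)) Q = 0) ∧
        ∀ f : MvPolynomial (Fin m) Fq,
          (∀ u ∈ f.support, (fun j => (u j : ℝ)) ∈ P) →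
          t ≤ (Finset.univ.filter (fun j : Fin n => MvPolynomial.eval (p j) f = y j)).card →
          MvPolynomial.aeval (Fin.snoc MvPolynomial.X f) Q = 0 := by
  intro y
  obtain rfl : ℓ = PolytopeCode.width P := funext hℓ
  obtain rfl : (fun j => (Sbox j).card) = s := funext hs
  exact basic_list_decoding_explicit_general hP hPfull (fun x hx => hPpos hx) hSbox0 hboxS
    (by rw [Fintype.card_fin, hlam_def]; exact Nat.le_ceil _) hlam_m (fun j => (hlam_lt j).le)
    (by simpa using ht_gt) y
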